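/- arXiv:1810.06201 — 3 statements merged into one kernel-verified Lean document; each statement's English description precedes it below -/
import Mathlib

section
/- Let G be a finite group, n ≥ 1, and σ a permutation of Fin n with exactly c orbits on Fin n (fixed points counted as orbits of size 1). Then the number of functions ξ : Fin n → G such that for every x ∈ Fin n the cycle product of ξ along the orbit of x equals the identity of G is exactly |G|^{n−c}. -/
/-- The cycle product of `ξ : Fin n → G` along the orbit of `x` under `σ`:
if `d ≥ 1` is the size of the orbit of `x` (the minimal period of `x` under `σ`),
this is `ξ(σ^{d-1} x) · ξ(σ^{d-2} x) ⋯ ξ(σ x) · ξ(x)`. -/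
noncomputable def cycleProd {G : Type*} [Group G] {n : ℕ} (σ : Equiv.Perm (Fin n))
    (ξ : Fin n → G) (x : Fin n) : G :=
  (((List.range (Function.minimalPeriod (⇑σ) x)).map (fun k => ξ ((σ ^ k) x))).reverse).prod

def pprod {G : Type*} [Group G] {n : ℕ} (σ : Equiv.Perm (Fin n))
    (ξ : Fin n → G) (x : Fin n) : ℕ → G
  | 0 => 1
  | k + 1 => ξ ((σ ^ k) x) * pprod σ ξ x k

theorem cycleProd_eq_pprod {G : Type*} [Group G] {n : ℕ} (σ : Equiv.Perm (Fin n))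
    (ξ : Fin n → G) (x : Fin n) :
    cycleProd σ ξ x = pprod σ ξ x (Function.minimalPeriod (⇑σ) x) := by
  have : ∀ k, (((List.range k).map (fun k => ξ ((σ ^ k) x))).reverse).prod = pprod σ ξ x k := by
    intro k
    induction k with
    | zero => simp [pprod]
    | succ k ih => rw [List.range_succ, List.map_append, List.reverse_append]; simp [pprod, ← ih]
  exact this _

theorem pprod_add {G : Type*} [Group G] {n : ℕ} (σ : Equiv.Perm (Fin n))
    (ξ : Fin n → G) (x : Fin n) (j k : ℕ) :
    pprod σ ξ x (j + k) = pprod σ ξ ((σ ^ j) x) k * pprod σ ξ x j := by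
  induction k with
  | zero => simp [pprod]
  | succ k ih =>
    rw [← add_assoc, pprod, pprod, ih, mul_assoc, add_comm j k, pow_add, Equiv.Perm.mul_apply]

theorem pow_mp {n : ℕ} (σ : Equiv.Perm (Fin n)) (x : Fin n) :
    (σ ^ (Function.minimalPeriod (⇑σ) x)) x = x := by
  rw [← Equiv.Perm.iterate_eq_pow]
  exact Function.iterate_minimalPeriod

theorem pprod_mod {G : Type*} [Group G] {n : ℕ} (σ : Equiv.Perm (Fin n))
    (ξ : Fin n → G) (x : Fin n) (h : cycleProd σ ξ x = 1) (k : ℕ) :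
    pprod σ ξ x (k % Function.minimalPeriod (⇑σ) x) = pprod σ ξ x k := by
  rw [cycleProd_eq_pprod] at h
  have key : ∀ m i, pprod σ ξ x (Function.minimalPeriod (⇑σ) x * m + i) = pprod σ ξ x i := by
    intro m i
    induction m with
    | zero => simp
    | succ m ih =>
      rw [Nat.mul_succ, add_comm (_ * m) _, add_assoc, pprod_add, pow_mp, h, ih, mul_one]
  conv_rhs => rw [← Nat.div_add_mod k (Function.minimalPeriod (⇑σ) x)]
  rw [key]

theorem pprod_congr {G : Type*} [Group G] {n : ℕ} (σ : Equiv.Perm (Fin n))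
    (ξ : Fin n → G) (x : Fin n) (h : cycleProd σ ξ x = 1) (j k : ℕ)
    (hjk : (σ ^ j) x = (σ ^ k) x) : pprod σ ξ x j = pprod σ ξ x k := by
  have hd : 0 < Function.minimalPeriod (⇑σ) x :=
    Function.minimalPeriod_pos_of_mem_periodicPts
      (Function.Injective.mem_periodicPts σ.injective x)
  rw [← pprod_mod σ ξ x h j, ← pprod_mod σ ξ x h k]
  congr 1
  rw [← Equiv.Perm.iterate_eq_pow, ← Equiv.Perm.iterate_eq_pow,
    ← Function.iterate_mod_minimalPeriod_eq (n := j),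
    ← Function.iterate_mod_minimalPeriod_eq (n := k)] at hjk
  exact (Function.iterate_eq_iterate_iff_of_lt_minimalPeriod
    (Nat.mod_lt _ hd) (Nat.mod_lt _ hd)).1 hjk

theorem pprod_cob {G : Type*} [Group G] {n : ℕ} (σ : Equiv.Perm (Fin n))
    (g : Fin n → G) (x : Fin n) (k : ℕ) :
    pprod σ (fun x => g (σ x) * (g x)⁻¹) x k = g ((σ ^ k) x) * (g x)⁻¹ := by
  induction k with
  | zero => simp [pprod]
  | succ k ih => rw [pprod, ih, pow_succ', Equiv.Perm.mul_apply]; group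

theorem exists_rep {n : ℕ} (σ : Equiv.Perm (Fin n)) (x : Fin n) :
    ∃ k : ℕ, (σ ^ k) (Quotient.out (Quotient.mk (Equiv.Perm.SameCycle.setoid σ) x)) = x := by
  have h : σ.SameCycle (Quotient.out (Quotient.mk (Equiv.Perm.SameCycle.setoid σ) x)) x :=
    Quotient.mk_out (s := Equiv.Perm.SameCycle.setoid σ) x
  obtain ⟨k, _, hk⟩ := h.exists_pow_eq'
  exact ⟨k, hk⟩

/-- Let `G` be a finite group, `n ≥ 1`, and `σ` a permutation of `Fin n`
with exactly `c` orbits.  The number of `ξ : Fin n → G` such that all cycle products of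
`ξ` along the orbits of `σ` are trivial is `|G| ^ (n - c)`. -/
theorem stmt5 (G : Type*) [Group G] [Fintype G] {n : ℕ} (hn : 1 ≤ n)
    (σ : Equiv.Perm (Fin n)) (c : ℕ)
    (hc : c = Nat.card (Quotient (Equiv.Perm.SameCycle.setoid σ))) :
    Nat.card {ξ : Fin n → G // ∀ x : Fin n, cycleProd σ ξ x = 1} =
      Fintype.card G ^ (n - c) := by
  classical
  let S := Equiv.Perm.SameCycle.setoid σ
  let p : Fin n → Prop := fun a => a ∈ Set.range (Quotient.out : Quotient S → Fin n)
  let x₀ : {a // p a} → G := fun _ => 1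
  let F : {g : Fin n → G // g ∘ (Subtype.val : {a // p a} → Fin n) = x₀} →
      {ξ : Fin n → G // ∀ x : Fin n, cycleProd σ ξ x = 1} := fun g =>
    ⟨fun x => g.1 (σ x) * (g.1 x)⁻¹, fun x => by
      rw [cycleProd_eq_pprod, pprod_cob, pow_mp, mul_inv_cancel]⟩
  have hrep : ∀ (g : {g : Fin n → G // g ∘ (Subtype.val : {a // p a} → Fin n) = x₀})
      (q : Quotient S), g.1 q.out = 1 := fun g q => congrFun g.2 ⟨q.out, q, rfl⟩
  have hF : Function.Bijective F := by
    constructor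
    · intro g g' h
      have h1 := congrArg Subtype.val h
      apply Subtype.ext
      funext x
      obtain ⟨k, hk⟩ := exists_rep σ x
      have h2 := pprod_cob σ g.1 (Quotient.mk S x).out k
      have h3 := pprod_cob σ g'.1 (Quotient.mk S x).out k
      rw [hk, hrep, inv_one, mul_one] at h2 h3
      rw [← h2, ← h3]
      exact congrArg (fun ξ => pprod σ ξ (Quotient.mk S x).out k) h1
    · rintro ⟨ξ, hξ⟩
      choose k hk using exists_rep σ
      refine ⟨⟨fun x => pprod σ ξ (Quotient.mk S x).out (k x), ?_⟩, ?_⟩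
      · funext ⟨a, q, hq⟩
        subst hq
        have hk' := hk q.out
        change pprod σ ξ (Quotient.mk S q.out).out (k q.out) = 1
        have e : (Quotient.mk S q.out) = q := Quotient.out_eq q
        change (σ ^ (k q.out)) (Quotient.mk S q.out).out = _ at hk'
        rw [e] at hk' ⊢
        exact pprod_congr σ ξ _ (hξ _) _ 0 (by simpa using hk')
      · apply Subtype.ext
        funext x
        change pprod σ ξ (Quotient.mk S (σ x)).out (k (σ x)) *
          (pprod σ ξ (Quotient.mk S x).out (k x))⁻¹ = ξ x
        have e : Quotient.mk S (σ x) = Quotient.mk S x :=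
          Quotient.sound (s := S) (show σ.SameCycle (σ x) x from
            Equiv.Perm.sameCycle_apply_left.2 (Equiv.Perm.SameCycle.refl σ x))
        have h1 : (σ ^ k (σ x)) (Quotient.mk S (σ x)).out = σ x := hk (σ x)
        have h2 : (σ ^ k x) (Quotient.mk S x).out = x := hk x
        rw [e] at h1 ⊢
        rw [pprod_congr σ ξ _ (hξ _) (k (σ x)) (k x + 1)
          (by rw [h1, pow_succ', Equiv.Perm.mul_apply, h2]), pprod, h2, mul_inv_cancel_right]
  rw [← Nat.card_congr (Equiv.ofBijective F hF), Nat.card_congr (Equiv.subtypePreimage p x₀),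
    Nat.card_fun, Nat.card_eq_fintype_card (α := G)]
  congr 1
  have hp : Nat.card {a // p a} = c := by
    rw [hc]
    exact (Nat.card_congr (Equiv.ofInjective (Quotient.out : Quotient S → Fin n)
      Quotient.out_injective)).symm
  rw [Nat.card_eq_fintype_card, Fintype.card_subtype_compl, Fintype.card_fin,
    ← Nat.card_eq_fintype_card, hp]
end

section
/- Let F be a field, m ≥ 2 an integer, α_1, …, α_m ∈ F, and f₀(T) ∈ F[T] a polynomial of degree strictly greater than m. Let K = F(A_1, …, A_m) be the field of rational functions in m independent variables over F. Then the polynomial 𝓕(T) = f₀(T) + Σ_{i=1}^{m} A_i T^i + Σ_{i=1}^{m} A_i α_i ∈ K[T] is separable as a polynomial in T. -/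
theorem aux_closure (F L : Type*) [Field F] [Field L] [Algebra F L] (S : Set L) :
    ∃ C : IntermediateField F L, ∀ x, x ∈ C ↔ IsAlgebraic (Algebra.adjoin F S) x := by
  refine ⟨{ (Subalgebra.algebraicClosure (Algebra.adjoin F S) L).restrictScalars F with
    inv_mem' := fun x hx => ?_ }, fun x => Iff.rfl⟩
  exact IsAlgebraic.inv hx

theorem aux_main (F L : Type*) [Field F] [Field L] [Algebra F L] (n : ℕ)
    (a : Fin (n + 2) → L) (ha : AlgebraicIndependent F a) (α : Fin (n + 2) → F)
    (f : Polynomial F) (t : L)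
    (h1 : Polynomial.aeval t f +
      ∑ i, a i * (t ^ ((i : ℕ) + 1) + algebraMap F L (α i)) = 0)
    (h2 : Polynomial.aeval t (Polynomial.derivative f) +
      ∑ i, a i * (((i : ℕ) + 1 : L) * t ^ (i : ℕ)) = 0) : False := by
  have hpol : ∀ (C : IntermediateField F L) (p : Polynomial F), t ∈ C →
      Polynomial.aeval t p ∈ C := fun C p ht => by
    rw [Polynomial.aeval_eq_sum_range]
    exact sum_mem fun i _ => C.smul_mem (pow_mem ht i)
  have hnat : ∀ (C : IntermediateField F L) (k : ℕ), ((k : L) + 1) ∈ C := fun C k =>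
    add_mem (natCast_mem C k) (one_mem C)
  by_cases ht : IsAlgebraic F t
  · obtain ⟨C, hC⟩ := aux_closure F L (a '' {0}ᶜ)
    have htC : t ∈ C := (hC t).2 (ht.extendScalars (algebraMap F _).injective)
    refine ha.transcendental_adjoin (s := {0}ᶜ) (i := 0) (by simp) ((hC _).1 ?_)
    have haC : ∀ i : Fin (n+1), a i.succ ∈ C := fun i => (hC _).2
      (isAlgebraic_algebraMap (⟨a i.succ, Algebra.subset_adjoin ⟨_, by simp, rfl⟩⟩ :
        Algebra.adjoin F (a '' {0}ᶜ)))
    rw [Fin.sum_univ_succ] at h2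
    have : a 0 = - (Polynomial.aeval t (Polynomial.derivative f) +
      ∑ i : Fin (n+1), a i.succ * (((i.succ : ℕ) + 1 : L) * t ^ (i.succ : ℕ))) := by
      simp only [Fin.val_zero, Nat.cast_zero, pow_zero] at h2
      linear_combination h2
    rw [this]
    exact neg_mem (add_mem (hpol _ _ htC) (sum_mem fun i _ =>
      mul_mem (haC i) (mul_mem (hnat _ _) (pow_mem htC _))))
  · set S : Set L := insert t (Set.range fun i : Fin n => a i.succ.succ) with hS
    obtain ⟨C, hC⟩ := aux_closure F L S
    have hSC : ∀ x ∈ S, x ∈ C := fun x hx => (hC _).2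
      (isAlgebraic_algebraMap (⟨x, Algebra.subset_adjoin hx⟩ : Algebra.adjoin F S))
    have htC : t ∈ C := hSC _ (Set.mem_insert _ _)
    have haC : ∀ i : Fin n, a i.succ.succ ∈ C := fun i => hSC _ (Set.mem_insert_of_mem _ ⟨i, rfl⟩)
    rw [Fin.sum_univ_succ, Fin.sum_univ_succ] at h1 h2
    have hP : Polynomial.aeval t f + ∑ i : Fin n, a i.succ.succ *
        (t ^ ((i.succ.succ : ℕ) + 1) + algebraMap F L (α i.succ.succ)) ∈ C :=
      add_mem (hpol _ _ htC) (sum_mem fun i _ =>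
        mul_mem (haC i) (add_mem (pow_mem htC _) (C.algebraMap_mem _)))
    have hQ : Polynomial.aeval t (Polynomial.derivative f) + ∑ i : Fin n, a i.succ.succ *
        (((i.succ.succ : ℕ) + 1 : L) * t ^ (i.succ.succ : ℕ)) ∈ C :=
      add_mem (hpol _ _ htC) (sum_mem fun i _ =>
        mul_mem (haC i) (mul_mem (hnat _ _) (pow_mem htC _)))
    generalize hs1 : (∑ i : Fin n, a i.succ.succ *
        (t ^ ((i.succ.succ : ℕ) + 1) + algebraMap F L (α i.succ.succ))) = s1 at *
    generalize hs2 : (∑ i : Fin n, a i.succ.succ *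
        (((i.succ.succ : ℕ) + 1 : L) * t ^ (i.succ.succ : ℕ))) = s2 at *
    have h01 : (Fin.succ 0 : Fin (n+2)) = 1 := rfl
    simp only [h01, Fin.val_zero, Fin.val_one, Nat.cast_zero, Nat.cast_one, pow_zero] at h1 h2
    have hD : t ^ 2 + 2 * algebraMap F L (α 0) * t - algebraMap F L (α 1) ≠ 0 := by
      intro h
      apply ht
      refine ⟨Polynomial.X ^ 2 + Polynomial.C (2 * α 0) * Polynomial.X - Polynomial.C (α 1),
        ?_, by simpa [map_ofNat] using h⟩
      intro h0
      have := congrArg (fun p => Polynomial.coeff p 2) h0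
      simp [Polynomial.coeff_X, Polynomial.coeff_C] at this
    have h2C : (2 : L) ∈ C := ofNat_mem C 2
    have ha1 : a 1 ∈ C := by
      have : a 1 = ((Polynomial.aeval t f + s1) - (Polynomial.aeval t (Polynomial.derivative f)
          + s2) * (t + algebraMap F L (α 0))) /
          (t ^ 2 + 2 * algebraMap F L (α 0) * t - algebraMap F L (α 1)) := by
        rw [eq_div_iff hD]
        linear_combination (t + algebraMap F L (α 0)) * h2 - h1
      rw [this]
      exact div_mem (sub_mem hP (mul_mem hQ (add_mem htC (C.algebraMap_mem _))))
        (sub_mem (add_mem (pow_mem htC _) (mul_mem (mul_mem h2C (C.algebraMap_mem _)) htC))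
          (C.algebraMap_mem _))
    have ha0 : a 0 ∈ C := by
      have : a 0 = -(Polynomial.aeval t (Polynomial.derivative f) + s2) - 2 * t * a 1 := by
        linear_combination h2
      rw [this]
      exact sub_mem (neg_mem hQ) (mul_mem (mul_mem h2C htC) ha1)
    have hall : Set.range a ⊆ (AlgebraicIndependent.matroid F L).closure S := by
      rw [AlgebraicIndependent.matroid_closure_eq]
      rintro _ ⟨i, rfl⟩
      refine (hC _).1 ?_
      refine Fin.cases ha0 (fun i => Fin.cases ha1 (fun i => haC i) i) i
    have hind : (AlgebraicIndependent.matroid F L).Indep (Set.range a) := ha.coe_range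
    have hle := (AlgebraicIndependent.matroid F L).eRk_mono hall
    rw [Matroid.eRk_closure_eq, hind.eRk_eq_encard] at hle
    have hle2 := hle.trans (Matroid.eRk_le_encard _ _)
    rw [← Set.image_univ, ha.injective.encard_image, hS] at hle2
    have hle3 := hle2.trans (Set.encard_insert_le _ _)
    rw [← Set.image_univ] at hle3
    have hle4 := hle3.trans (add_le_add_left (Set.encard_image_le _ _) 1)
    simp only [Set.encard_univ, ENat.card_eq_coe_fintype_card, Fintype.card_fin] at hle4
    norm_cast at hle4
    omega

theorem aux_sep (F : Type*) [Field F] (n : ℕ) (α : Fin (n + 2) → F)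
    (f₀ : Polynomial F) (K L : Type*) [Field K] [Field L] [Algebra K L] [IsAlgClosed L]
    [Algebra (MvPolynomial (Fin (n + 2)) F) K]
    [IsFractionRing (MvPolynomial (Fin (n + 2)) F) K] :
    (f₀.map ((algebraMap (MvPolynomial (Fin (n + 2)) F) K).comp MvPolynomial.C) +
      ∑ i : Fin (n + 2),
        Polynomial.C ((algebraMap (MvPolynomial (Fin (n + 2)) F) K) (MvPolynomial.X i)) *
          (Polynomial.X ^ ((i : ℕ) + 1) +
            Polynomial.C ((algebraMap (MvPolynomial (Fin (n + 2)) F) K)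
              (MvPolynomial.C (α i))))).Separable := by
  let _ : Algebra F L := ((algebraMap K L).comp
    ((algebraMap (MvPolynomial (Fin (n + 2)) F) K).comp MvPolynomial.C)).toAlgebra
  rw [Polynomial.separable_def]
  refine (Polynomial.isCoprime_iff_aeval_ne_zero_of_isAlgClosed _ L _ _).2 ?_
  intro t
  by_contra! h
  obtain ⟨h1, h2⟩ := h
  have hX : AlgebraicIndependent F
      (fun i : Fin (n + 2) => algebraMap K L (algebraMap (MvPolynomial (Fin (n + 2)) F) K
        (MvPolynomial.X i))) := by
    exact (MvPolynomial.algebraicIndependent_X (Fin (n + 2)) F).map'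
      (f := ({ toRingHom := (algebraMap K L).comp
                (algebraMap (MvPolynomial (Fin (n + 2)) F) K)
               commutes' := fun _ => rfl } : MvPolynomial (Fin (n + 2)) F →ₐ[F] L))
      ((algebraMap K L).injective.comp (IsFractionRing.injective _ K))
  have hC' : ∀ x : F, algebraMap K L (algebraMap (MvPolynomial (Fin (n + 2)) F) K
      (MvPolynomial.C x)) = algebraMap F L x := fun x => rfl
  have hm : ∀ p : Polynomial F, Polynomial.aeval t
      (p.map ((algebraMap (MvPolynomial (Fin (n + 2)) F) K).comp MvPolynomial.C)) =
      Polynomial.aeval t p := fun p => by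
    rw [Polynomial.aeval_def, Polynomial.eval₂_map]; rfl
  refine aux_main F L n _ hX α f₀ t ?_ ?_
  · simpa [hC', hm] using h1
  · simpa [hC', hm, Polynomial.derivative_map, Polynomial.derivative_X_pow] using h2


/-- Let `F` be a field, `m ≥ 2`, `α_1, …, α_m ∈ F`, and `f₀ ∈ F[T]` of
degree `> m`.  Over the field `K = F(A_1, …, A_m)` of rational functions in `m`
independent variables (realized as the fraction field of `MvPolynomial (Fin m) F`, the
variable `A_{i+1}` being `X i`), the polynomial
`𝓕(T) = f₀(T) + Σ_{i=1}^m A_i T^i + Σ_{i=1}^m A_i α_i` is separable in `T`. -/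
theorem stmt16 (F : Type*) [Field F] (m : ℕ) (hm : 2 ≤ m) (α : Fin m → F)
    (f₀ : Polynomial F) (hdeg : m < f₀.natDegree) :
    (f₀.map ((algebraMap (MvPolynomial (Fin m) F)
          (FractionRing (MvPolynomial (Fin m) F))).comp MvPolynomial.C) +
      ∑ i : Fin m,
        Polynomial.C ((algebraMap (MvPolynomial (Fin m) F)
            (FractionRing (MvPolynomial (Fin m) F))) (MvPolynomial.X i)) *
          (Polynomial.X ^ ((i : ℕ) + 1) +
            Polynomial.C ((algebraMap (MvPolynomial (Fin m) F)
              (FractionRing (MvPolynomial (Fin m) F))) (MvPolynomial.C (α i))))).Separable := by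
  obtain ⟨n, rfl⟩ : ∃ n, m = n + 2 := ⟨m - 2, by omega⟩
  exact aux_sep F n α f₀ (FractionRing (MvPolynomial (Fin (n + 2)) F))
    (AlgebraicClosure (FractionRing (MvPolynomial (Fin (n + 2)) F)))
end

section
/- Let F be an algebraically closed field, m ≥ 1, and K = F(A_0, …, A_m) the field of rational functions in m+1 variables. Let f₀(T) ∈ F[T] be monic of degree n > m and f(T) = f₀(T) + Σ_{i=0}^{m} A_i T^i ∈ K[T]. Let L be a splitting field of f over K, with f(T) = ∏_{i=1}^{n} (T − y_i) in L[T]. Let D(T) = r₁(T)/r₂(T) ∈ F(T) be a nonzero rational function in lowest terms (r₁, r₂ coprime) with deg r₂ ≥ deg r₁, and write r₂(T) = c ∏_{j=1}^{d} (T − α_j) with c ∈ F^× and α_j ∈ F. Then there exists a polynomial h ∈ F[A_0, …, A_m] such that Σ_{i=1}^{n} D(y_i) = h(A_0,…,A_m) / ∏_{j=1}^{d} f(α_j), and h is coprime to ∏_{j=1}^{d} f(α_j) when both are regarded as polynomials in the single variable A_0 over the field F(A_1, …, A_m). -/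
noncomputable section

/-- The generic polynomial `f(T) = f₀(T) + Σ_{i=0}^m A_i T^i`, with coefficients in the
polynomial ring `F[A_0, …, A_m] = MvPolynomial (Fin (m+1)) F` (the variable `A_i` being
`MvPolynomial.X i`). -/
def genPoly (F : Type*) [Field F] (m : ℕ) (f₀ : Polynomial F) :
    Polynomial (MvPolynomial (Fin (m + 1)) F) :=
  f₀.map MvPolynomial.C +
    ∑ i : Fin (m + 1), Polynomial.C (MvPolynomial.X i) * Polynomial.X ^ (i : ℕ)

/-- The canonical map from `F[A_0, …, A_m]` to an extension `L` of its fraction field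
`K = F(A_0, …, A_m)` (realized as `FractionRing (MvPolynomial (Fin (m+1)) F)`). -/
def toExt (F : Type*) [Field F] (m : ℕ) (L : Type*) [Field L]
    [Algebra (FractionRing (MvPolynomial (Fin (m + 1)) F)) L] :
    MvPolynomial (Fin (m + 1)) F →+* L :=
  (algebraMap (FractionRing (MvPolynomial (Fin (m + 1)) F)) L).comp
    (algebraMap (MvPolynomial (Fin (m + 1)) F)
      (FractionRing (MvPolynomial (Fin (m + 1)) F)))

/-- The identification of `F[A_0, …, A_m]` with polynomials in the single variable `A_0`
over the field `F(A_1, …, A_m)` (the fraction field of `MvPolynomial (Fin m) F`); it is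
injective, and the variable `A_0 = X 0` is sent to `Polynomial.X`. -/
def toA0Poly (F : Type*) [Field F] (m : ℕ) :
    MvPolynomial (Fin (m + 1)) F →+* Polynomial (FractionRing (MvPolynomial (Fin m) F)) :=
  (Polynomial.mapRingHom (algebraMap (MvPolynomial (Fin m) F)
      (FractionRing (MvPolynomial (Fin m) F)))).comp
    (MvPolynomial.finSuccEquiv F m).toAlgHom.toRingHom

open Polynomial in
/-- The numerator expression `Σ_i r₁(z_i) ∏_{k ≠ i} r₂(z_k)`. -/
def numer {F E : Type*} [CommRing F] [CommRing E] (φ : F →+* E) {n : ℕ} (r₁ r₂ : Polynomial F)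
    (z : Fin n → E) : E :=
  ∑ i : Fin n, (r₁.eval₂ φ (z i)) * ∏ k ∈ Finset.univ.erase i, r₂.eval₂ φ (z k)

lemma numer_map {F E E' : Type*} [CommRing F] [CommRing E] [CommRing E'] (φ : F →+* E)
    (ψ : E →+* E') {n : ℕ} (r₁ r₂ : Polynomial F) (z : Fin n → E) :
    ψ (numer φ r₁ r₂ z) = numer (ψ.comp φ) r₁ r₂ (fun i => ψ (z i)) := by
  simp [numer, Polynomial.hom_eval₂]

lemma numer_perm {F E : Type*} [CommRing F] [CommRing E] (φ : F →+* E) {n : ℕ}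
    (r₁ r₂ : Polynomial F) (z : Fin n → E) (e : Equiv.Perm (Fin n)) :
    numer φ r₁ r₂ (fun i => z (e i)) = numer φ r₁ r₂ z := by
  unfold numer
  rw [← Equiv.sum_comp e (fun i => (r₁.eval₂ φ (z i)) *
    ∏ k ∈ Finset.univ.erase i, r₂.eval₂ φ (z k))]
  refine Finset.sum_congr rfl fun i _ => ?_
  congr 1
  refine Finset.prod_bij (fun a _ => e a) ?_ ?_ ?_ ?_
  · intro a ha; simpa using ha
  · intro a _ b _ h; exact e.injective h
  · intro b hb
    refine ⟨e.symm b, ?_, by simp⟩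
    simp only [Finset.mem_erase, Finset.mem_univ, and_true] at hb ⊢
    rintro rfl; simp at hb
  · intro a _; rfl

lemma exists_symm (F : Type*) [CommRing F] (n : ℕ) (r₁ r₂ : Polynomial F) :
    ∃ Ψ : MvPolynomial (Fin n) F,
      MvPolynomial.aeval (fun i : Fin n => MvPolynomial.esymm (Fin n) F (i + 1)) Ψ =
        numer MvPolynomial.C r₁ r₂ (fun i => MvPolynomial.X i) := by
  have hs : (numer (MvPolynomial.C (σ := Fin n)) r₁ r₂ (fun i => MvPolynomial.X i)).IsSymmetric := by
    intro e
    have h := numer_map (MvPolynomial.C (σ := Fin n))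
      (MvPolynomial.rename (R := F) e).toRingHom r₁ r₂ (fun i => MvPolynomial.X i)
    have h2 : ((MvPolynomial.rename (R := F) e).toRingHom).comp (MvPolynomial.C (σ := Fin n))
      = MvPolynomial.C := by ext1 x; simp
    rw [h2] at h
    have h3 := numer_perm (MvPolynomial.C (σ := Fin n)) r₁ r₂ (fun i => MvPolynomial.X i) e
    refine Eq.trans h (Eq.trans ?_ h3)
    simp
  obtain ⟨Ψ, h⟩ := MvPolynomial.esymmAlgHom_surjective F (σ := Fin n) (n := n) (by simp)
    ⟨_, hs⟩
  refine ⟨Ψ, ?_⟩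
  rw [← MvPolynomial.esymmAlgHom_apply, h]

/-- evaluate a symmetric expression from coefficients -/
def evalCoeff {F R : Type*} [CommRing F] [CommRing R] (φ : F →+* R) {n : ℕ}
    (Ψ : MvPolynomial (Fin n) F) (p : Polynomial R) : R :=
  MvPolynomial.eval₂ φ (fun i : Fin n => (-1) ^ ((i : ℕ) + 1) * p.coeff (n - (i + 1))) Ψ

lemma evalCoeff_spec {F R E : Type*} [CommRing F] [CommRing R] [CommRing E] [Nontrivial E] (φ : F →+* R)
    {n : ℕ} (r₁ r₂ : Polynomial F) (Ψ : MvPolynomial (Fin n) F)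
    (hΨ : MvPolynomial.aeval (fun i : Fin n => MvPolynomial.esymm (Fin n) F (i + 1)) Ψ =
        numer MvPolynomial.C r₁ r₂ (fun i => MvPolynomial.X i))
    (p : Polynomial R) (ψ : R →+* E) (z : Fin n → E)
    (hz : p.map ψ = ∏ i : Fin n, (Polynomial.X - Polynomial.C (z i))) :
    ψ (evalCoeff φ Ψ p) = numer (ψ.comp φ) r₁ r₂ z := by
  let _ : Algebra F E := (ψ.comp φ).toAlgebra
  have h1 : numer (ψ.comp φ) r₁ r₂ z =
      MvPolynomial.aeval z (numer MvPolynomial.C r₁ r₂ (fun i : Fin n => MvPolynomial.X (R := F) i)) := by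
    have h := numer_map (MvPolynomial.C (σ := Fin n) (R := F))
      (MvPolynomial.aeval (R := F) z).toRingHom r₁ r₂ (fun i => MvPolynomial.X i)
    refine Eq.trans ?_ h.symm
    congr 1
    · ext x; simp; rfl
    · funext i; simp
  rw [h1, ← hΨ, evalCoeff, MvPolynomial.hom_eval₂, MvPolynomial.aeval_def (S₁ := MvPolynomial (Fin n) F)]
  rw [← AlgHom.coe_toRingHom, MvPolynomial.hom_eval₂]
  congr 1
  · ext x; simp; rfl
  · funext i
    simp only [AlgHom.coe_toRingHom, map_mul, map_pow, map_neg, map_one]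
    rw [MvPolynomial.aeval_esymm_eq_multiset_esymm, ← Polynomial.coeff_map, hz]
    have := Multiset.prod_X_sub_C_coeff (Finset.univ.val.map z) (k := n - (i + 1)) (by simp)
    simp only [Multiset.map_map, Multiset.card_map, Finset.card_val, Finset.card_univ,
      Fintype.card_fin] at this
    have hi : n - (n - ((i : ℕ) + 1)) = i + 1 := by omega
    rw [hi] at this
    have h2 : (∏ i : Fin n, (Polynomial.X - Polynomial.C (z i))) =
      (Multiset.map ((fun t => Polynomial.X - Polynomial.C t) ∘ z) Finset.univ.val).prod := rfl
    rw [h2, this, ← mul_assoc, ← pow_add, Even.neg_one_pow (by simp), one_mul]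

lemma exists_fin_roots {E : Type*} [Field E] [IsAlgClosed E] (n : ℕ) (p : Polynomial E)
    (hp : p.Monic) (hn : p.natDegree = n) :
    ∃ z : Fin n → E, p = ∏ i : Fin n, (Polynomial.X - Polynomial.C (z i)) := by
  have h := IsAlgClosed.splits p
  have h1 := h.eq_prod_roots_of_monic hp
  have h2 := h.natDegree_eq_card_roots
  obtain ⟨l, hl⟩ := Quot.exists_rep p.roots
  have hl : p.roots = (l : Multiset E) := hl.symm
  rw [hl] at h1 h2
  simp only [Multiset.coe_card] at h2
  have h3 : l.length = n := by omega
  subst h3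
  refine ⟨l.get, ?_⟩
  conv_lhs => rw [h1]
  simp only [Multiset.map_coe, Multiset.prod_coe]
  rw [← List.prod_ofFn]
  congr 1
  apply List.ext_get <;> simp

/-- the part of `f(β)` free of `A_0` -/
def gPart (F : Type*) [Field F] (m : ℕ) (f₀ : Polynomial F) (β : F) : MvPolynomial (Fin m) F :=
  MvPolynomial.C (f₀.eval β) + ∑ i : Fin m, MvPolynomial.X i * MvPolynomial.C (β ^ ((i : ℕ) + 1))

/-- the derivative `f'(β)` -/
def gDer (F : Type*) [Field F] (m : ℕ) (f₀ : Polynomial F) (β : F) : MvPolynomial (Fin m) F :=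
  MvPolynomial.C (f₀.derivative.eval β) +
    ∑ i : Fin m, MvPolynomial.X i * MvPolynomial.C (((i : ℕ) + 1 : F) * β ^ (i : ℕ))

lemma toA0_C (F : Type*) [Field F] (m : ℕ) (x : F) : toA0Poly F m (MvPolynomial.C x) =
    Polynomial.C (algebraMap (MvPolynomial (Fin m) F) (FractionRing (MvPolynomial (Fin m) F)) (MvPolynomial.C x)) := by
  simp [toA0Poly, MvPolynomial.finSuccEquiv_apply]

lemma toA0_X0 (F : Type*) [Field F] (m : ℕ) : toA0Poly F m (MvPolynomial.X 0) =
    Polynomial.X := by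
  simp [toA0Poly, MvPolynomial.finSuccEquiv_apply]

lemma toA0_Xs (F : Type*) [Field F] (m : ℕ) (i : Fin m) :
    toA0Poly F m (MvPolynomial.X i.succ) =
    Polynomial.C (algebraMap (MvPolynomial (Fin m) F) (FractionRing (MvPolynomial (Fin m) F)) (MvPolynomial.X i)) := by
  simp [toA0Poly, MvPolynomial.finSuccEquiv_apply]

lemma toA0_eval (F : Type*) [Field F] (m : ℕ) (f₀ : Polynomial F) (β : F) :
    toA0Poly F m (Polynomial.eval (MvPolynomial.C β) (genPoly F m f₀)) =
      Polynomial.X + Polynomial.C (algebraMap (MvPolynomial (Fin m) F) (FractionRing (MvPolynomial (Fin m) F)) (gPart F m f₀ β)) := by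
  have h : Polynomial.eval (MvPolynomial.C β) (genPoly F m f₀) =
      MvPolynomial.C (f₀.eval β) + ∑ i : Fin (m + 1), MvPolynomial.X i * MvPolynomial.C β ^ (i : ℕ) := by
    simp [genPoly, Polynomial.eval_finsetSum, Polynomial.eval_map, Polynomial.eval₂_at_apply]
  rw [h, Fin.sum_univ_succ]
  simp only [map_add, map_sum, map_mul, map_pow, toA0_C, toA0_X0, toA0_Xs, gPart]
  simp only [Fin.val_zero, pow_zero, mul_one, Fin.val_succ]
  ring

lemma toA0_der (F : Type*) [Field F] (m : ℕ) (f₀ : Polynomial F) (β : F) :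
    toA0Poly F m (Polynomial.eval (MvPolynomial.C β) (genPoly F m f₀).derivative) =
      Polynomial.C (algebraMap (MvPolynomial (Fin m) F) (FractionRing (MvPolynomial (Fin m) F)) (gDer F m f₀ β)) := by
  have h : Polynomial.eval (MvPolynomial.C β) (genPoly F m f₀).derivative =
      MvPolynomial.C (f₀.derivative.eval β) + ∑ i : Fin (m + 1), MvPolynomial.X i *
        MvPolynomial.C ((i : ℕ) * β ^ ((i : ℕ) - 1)) := by
    simp [genPoly, Polynomial.eval_finsetSum, Polynomial.eval_map, Polynomial.eval₂_at_apply,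
      Polynomial.derivative_map, Polynomial.derivative_X_pow]
  rw [h, Fin.sum_univ_succ]
  simp only [map_add, map_sum, map_mul, toA0_C, toA0_X0, toA0_Xs, gDer]
  simp

lemma gPart_ne (F : Type*) [Field F] (m : ℕ) (hm : 1 ≤ m) (f₀ : Polynomial F) (α β : F)
    (h : gPart F m f₀ α = gPart F m f₀ β) : α = β := by
  have h2 := congrArg (MvPolynomial.pderiv (⟨0, hm⟩ : Fin m)) h
  simpa [gPart, MvPolynomial.pderiv_X, Pi.single_apply, -map_pow, MvPolynomial.pderiv_C, ite_mul, mul_ite] using h2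

lemma gDer_ne (F : Type*) [Field F] (m : ℕ) (hm : 1 ≤ m) (f₀ : Polynomial F) (α : F) :
    gDer F m f₀ α ≠ 0 := by
  intro h
  have h2 := congrArg (MvPolynomial.pderiv (⟨0, hm⟩ : Fin m)) h
  rw [gDer, map_add, map_sum] at h2
  simp only [Derivation.leibniz, MvPolynomial.pderiv_C, smul_zero, zero_add, MvPolynomial.pderiv_X,
    Pi.single_apply, smul_eq_mul, mul_ite, mul_one, mul_zero] at h2
  simp at h2

lemma genPoly_monic (F : Type*) [Field F] (m n : ℕ) (hmn : m < n)
    (f₀ : Polynomial F) (hmonic : f₀.Monic) (hdeg : f₀.natDegree = n) :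
    (genPoly F m f₀).Monic ∧ (genPoly F m f₀).natDegree = n := by
  have hm : (f₀.map (MvPolynomial.C (σ := Fin (m+1)))).Monic := hmonic.map _
  have hd : (f₀.map (MvPolynomial.C (σ := Fin (m+1)))).degree = n := by
    rw [Polynomial.degree_map_eq_of_injective (MvPolynomial.C_injective _ _),
      Polynomial.degree_eq_natDegree hmonic.ne_zero, hdeg]
  have hs : (∑ i : Fin (m + 1), Polynomial.C (MvPolynomial.X (R := F) i) * Polynomial.X ^ (i : ℕ)).degree
      < (f₀.map (MvPolynomial.C (σ := Fin (m+1)))).degree := by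
    rw [hd]
    refine lt_of_le_of_lt (Polynomial.degree_sum_le _ _) ?_
    rw [Finset.sup_lt_iff (by exact WithBot.bot_lt_coe n)]
    intro i _
    refine lt_of_le_of_lt (Polynomial.degree_C_mul_X_pow_le _ _) ?_
    have := i.2
    exact_mod_cast (by omega : (i : ℕ) < n)
  refine ⟨hm.add_of_left hs, ?_⟩
  apply Polynomial.natDegree_eq_of_degree_eq_some
  rw [genPoly, Polynomial.degree_add_eq_left_of_degree_lt hs, hd]

lemma sum_div_eq {F E : Type*} [CommRing F] [Field E] (φ : F →+* E) {n : ℕ}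
    (r₁ r₂ : Polynomial F) (z : Fin n → E) (hz : ∀ i, r₂.eval₂ φ (z i) ≠ 0) :
    (∑ i, r₁.eval₂ φ (z i) / r₂.eval₂ φ (z i)) =
      numer φ r₁ r₂ z / ∏ i, r₂.eval₂ φ (z i) := by
  rw [numer, Finset.sum_div]
  refine Finset.sum_congr rfl fun i _ => ?_
  rw [← Finset.mul_prod_erase Finset.univ _ (Finset.mem_univ i)]
  rw [mul_div_mul_right]
  exact Finset.prod_ne_zero_iff.2 fun k _ => hz k

/-- Nonvanishing of the specialized numerator. -/
lemma numer_ne {F E : Type*} [Field F] [Field E] (φ : F →+* E) {n : ℕ}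
    (r₁ r₂ : Polynomial F) (hred : IsCoprime r₁ r₂) (p : Polynomial E) (z : Fin n → E)
    (hp : p = ∏ i, (Polynomial.X - Polynomial.C (z i)))
    (c : F) (hc : c ≠ 0) (d : ℕ) (α : Fin d → F)
    (hr₂ : r₂ = Polynomial.C c * ∏ j : Fin d, (Polynomial.X - Polynomial.C (α j)))
    (j : Fin d) (h0 : p.eval (φ (α j)) = 0) (h1 : p.derivative.eval (φ (α j)) ≠ 0)
    (hne : ∀ k, α k ≠ α j → p.eval (φ (α k)) ≠ 0) : numer φ r₁ r₂ z ≠ 0 := by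
  classical
  have e2 : ∀ t, r₂.eval₂ φ t = φ c * ∏ k, (t - φ (α k)) := by
    intro t
    rw [hr₂, Polynomial.eval₂_mul, Polynomial.eval₂_C, Polynomial.eval₂_finsetProd]
    simp
  have ev : ∀ t, p.eval t = ∏ i, (t - z i) := by
    intro t; rw [hp, Polynomial.eval_prod]; simp
  have hroot : r₂.eval₂ φ (φ (α j)) = 0 := by
    rw [e2, Finset.prod_eq_zero (Finset.mem_univ j) (by simp), mul_zero]
  rw [ev, Finset.prod_eq_zero_iff] at h0
  obtain ⟨i₀, -, hi₀⟩ := h0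
  have hi₀ : z i₀ = φ (α j) := (sub_eq_zero.1 hi₀).symm
  have hsimple : ∀ i, i ≠ i₀ → z i ≠ φ (α j) := by
    intro i hi hzi
    apply h1
    rw [hp, ← Finset.mul_prod_erase Finset.univ _ (Finset.mem_univ i₀),
      ← Finset.mul_prod_erase (Finset.univ.erase i₀) _
        (Finset.mem_erase.2 ⟨hi, Finset.mem_univ i⟩), hi₀, hzi]
    simp [Polynomial.derivative_mul]
  rw [numer, Finset.sum_eq_single i₀]
  · refine mul_ne_zero ?_ (Finset.prod_ne_zero_iff.2 ?_)
    · rw [hi₀]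
      intro h
      obtain ⟨a, b, hab⟩ := hred
      have := congrArg (Polynomial.eval₂ φ (φ (α j))) hab
      simp only [Polynomial.eval₂_add, Polynomial.eval₂_mul, Polynomial.eval₂_one, h, hroot] at this
      simp at this
    · intro i hi
      rw [e2]
      refine mul_ne_zero (by simpa using hc) (Finset.prod_ne_zero_iff.2 ?_)
      intro k _ hk
      have hk : z i = φ (α k) := sub_eq_zero.1 hk
      by_cases hkj : α k = α j
      · exact hsimple i (Finset.ne_of_mem_erase hi) (by rw [hk, hkj])
      · apply hne k hkj
        rw [ev]
        exact Finset.prod_eq_zero (Finset.mem_univ i) (by rw [hk, sub_self])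
  · intro i _ hi
    rw [Finset.prod_eq_zero (Finset.mem_erase.2 ⟨hi.symm, Finset.mem_univ i₀⟩), mul_zero]
    rw [hi₀, hroot]
  · simp

/-- Let `F` be an algebraically closed field, `m ≥ 1`,
`K = F(A_0, …, A_m)`, `f₀ ∈ F[T]` monic of degree `n > m`, and
`f = f₀ + Σ_{i=0}^m A_i T^i ∈ K[T]`.  Let `L` be a splitting field of `f` over `K`, with
`f = ∏_{i=1}^n (T − y_i)` in `L[T]`.  Let `D = r₁/r₂ ∈ F(T)` be a nonzero rational
function in lowest terms with `deg r₂ ≥ deg r₁` and `r₂ = c ∏_{j=1}^d (T − α_j)`.  Then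
there is `h ∈ F[A_0, …, A_m]` with `Σ_{i=1}^n D(y_i) = h / ∏_{j=1}^d f(α_j)` and `h`
coprime to `∏_{j=1}^d f(α_j)` as polynomials in the single variable `A_0` over the field
`F(A_1, …, A_m)`. -/
theorem stmt17 (F : Type*) [Field F] [IsAlgClosed F] (m : ℕ) (hm : 1 ≤ m)
    (n : ℕ) (hmn : m < n)
    (f₀ : Polynomial F) (hmonic : f₀.Monic) (hdeg : f₀.natDegree = n)
    (L : Type*) [Field L]
    [Algebra (FractionRing (MvPolynomial (Fin (m + 1)) F)) L]
    (y : Fin n → L)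
    (hsplit : (genPoly F m f₀).map (toExt F m L) =
      ∏ i : Fin n, (Polynomial.X - Polynomial.C (y i)))
    (r₁ r₂ : Polynomial F) (hr₁ : r₁ ≠ 0) (hred : IsCoprime r₁ r₂)
    (hdegle : r₁.degree ≤ r₂.degree)
    (c : F) (hc : c ≠ 0) (d : ℕ) (α : Fin d → F)
    (hr₂ : r₂ = Polynomial.C c * ∏ j : Fin d, (Polynomial.X - Polynomial.C (α j))) :
    ∃ h : MvPolynomial (Fin (m + 1)) F,
      (∑ i : Fin n,
          Polynomial.eval (y i) (r₁.map ((toExt F m L).comp MvPolynomial.C)) /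
            Polynomial.eval (y i) (r₂.map ((toExt F m L).comp MvPolynomial.C))) =
        toExt F m L h /
          toExt F m L (∏ j : Fin d, Polynomial.eval (MvPolynomial.C (α j)) (genPoly F m f₀)) ∧
      IsCoprime (toA0Poly F m h)
        (toA0Poly F m
          (∏ j : Fin d, Polynomial.eval (MvPolynomial.C (α j)) (genPoly F m f₀))) := by
  obtain ⟨Ψ, hΨ⟩ := exists_symm F n r₁ r₂
  set H := evalCoeff (MvPolynomial.C (σ := Fin (m + 1))) Ψ (genPoly F m f₀) with hH
  have hc' : c ^ n * (-1) ^ (n * d) ≠ 0 := by simp [hc]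
  have hinj : Function.Injective (toExt F m L) :=
    (algebraMap (FractionRing (MvPolynomial (Fin (m + 1)) F)) L).injective.comp
      (IsFractionRing.injective _ _)
  have hf : ∀ β, Polynomial.eval (MvPolynomial.C β) (genPoly F m f₀) ≠ 0 := by
    intro β h
    have h2 := toA0_eval F m f₀ β
    rw [h, map_zero] at h2
    exact Polynomial.X_add_C_ne_zero _ h2.symm
  refine ⟨MvPolynomial.C (c ^ n * (-1) ^ (n * d))⁻¹ * H, ?_, ?_⟩
  · set φ := (toExt F m L).comp MvPolynomial.C with hφ
    have e2 : ∀ t, r₂.eval₂ φ t = φ c * ∏ k, (t - φ (α k)) := by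
      intro t
      rw [hr₂, Polynomial.eval₂_mul, Polynomial.eval₂_C, Polynomial.eval₂_finsetProd]
      simp
    have ef : ∀ β, toExt F m L (Polynomial.eval (MvPolynomial.C β) (genPoly F m f₀)) =
        ∏ i, (φ β - y i) := by
      intro β
      rw [← Polynomial.eval₂_at_apply, ← Polynomial.eval_map, hsplit, Polynomial.eval_prod]
      simp [hφ]
    have hP : ∏ i, r₂.eval₂ φ (y i) = φ (c ^ n * (-1) ^ (n * d)) *
        toExt F m L (∏ j : Fin d, Polynomial.eval (MvPolynomial.C (α j)) (genPoly F m f₀)) := by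
      rw [map_prod]
      simp only [e2, ef, Finset.prod_mul_distrib]
      rw [Finset.prod_comm]
      have : ∀ j : Fin d, ∏ i, (y i - φ (α j)) = (-1) ^ n * ∏ i, (φ (α j) - y i) := by
        intro j
        have : ∀ i, y i - φ (α j) = (-1) * (φ (α j) - y i) := by intro i; ring
        simp only [this, Finset.prod_mul_distrib]
        simp
      simp only [this, Finset.prod_mul_distrib]
      simp [pow_mul, mul_assoc]
    have hPne : toExt F m L
        (∏ j : Fin d, Polynomial.eval (MvPolynomial.C (α j)) (genPoly F m f₀)) ≠ 0 := by
      rw [map_ne_zero_iff _ hinj]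
      exact Finset.prod_ne_zero_iff.2 fun j _ => hf _
    have hφc : φ (c ^ n * (-1) ^ (n * d)) ≠ 0 := by
      rw [map_ne_zero]; exact hc'
    have hz : ∀ i, r₂.eval₂ φ (y i) ≠ 0 := by
      have : ∏ i, r₂.eval₂ φ (y i) ≠ 0 := by rw [hP]; exact mul_ne_zero hφc hPne
      intro i
      exact Finset.prod_ne_zero_iff.1 this i (Finset.mem_univ i)
    simp only [Polynomial.eval_map]
    rw [sum_div_eq φ r₁ r₂ y hz, hP, map_mul (toExt F m L) (MvPolynomial.C _) H, hH,
      evalCoeff_spec MvPolynomial.C r₁ r₂ Ψ hΨ (genPoly F m f₀) (toExt F m L) y hsplit]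
    have : toExt F m L (MvPolynomial.C (c ^ n * (-1) ^ (n * d))⁻¹) =
        (φ (c ^ n * (-1) ^ (n * d)))⁻¹ := by
      rw [← map_inv₀]; rfl
    rw [this, ← hφ]
    generalize φ (c ^ n * (-1) ^ (n * d)) = u at hφc ⊢
    field_simp
  · rw [map_mul, map_prod]
    have hu : IsUnit (toA0Poly F m (MvPolynomial.C (c ^ n * (-1) ^ (n * d))⁻¹)) :=
      ((isUnit_iff_ne_zero.2 (inv_ne_zero hc')).map MvPolynomial.C).map (toA0Poly F m)
    rw [isCoprime_mul_unit_left_left hu]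
    refine IsCoprime.prod_right fun j _ => ?_
    rw [toA0_eval]
    set a := algebraMap (MvPolynomial (Fin m) F) (FractionRing (MvPolynomial (Fin m) F)) with ha
    have hainj : Function.Injective a := IsFractionRing.injective _ _
    set s := - a (gPart F m f₀ (α j)) with hs
    have hX : Polynomial.X + Polynomial.C (a (gPart F m f₀ (α j))) =
        Polynomial.X - Polynomial.C s := by simp [hs]
    rw [hX]
    refine IsCoprime.symm (((Polynomial.irreducible_X_sub_C s).coprime_iff_not_dvd).2 ?_)
    rw [Polynomial.dvd_iff_isRoot, Polynomial.IsRoot.def]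
    let E := AlgebraicClosure (FractionRing (MvPolynomial (Fin m) F))
    let ι := algebraMap (FractionRing (MvPolynomial (Fin m) F)) E
    let ψ : MvPolynomial (Fin (m + 1)) F →+* E :=
      ι.comp ((Polynomial.evalRingHom s).comp (toA0Poly F m))
    have hψ : ∀ q, ψ q = ι (Polynomial.eval s (toA0Poly F m q)) := fun q => rfl
    obtain ⟨hmon, hnd⟩ := genPoly_monic F m n hmn f₀ hmonic hdeg
    obtain ⟨z, hz⟩ := exists_fin_roots n ((genPoly F m f₀).map ψ) (hmon.map ψ)
      (by rw [hmon.natDegree_map, hnd])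
    have key := evalCoeff_spec MvPolynomial.C r₁ r₂ Ψ hΨ (genPoly F m f₀) ψ z hz
    have hev : ∀ β, ((genPoly F m f₀).map ψ).eval ((ψ.comp MvPolynomial.C) β) =
        ι (a (gPart F m f₀ β) - a (gPart F m f₀ (α j))) := by
      intro β
      rw [RingHom.comp_apply, Polynomial.eval_map, Polynomial.eval₂_at_apply, hψ, toA0_eval]
      congr 1
      simp [hs, ha]
      ring
    have hne := numer_ne (ψ.comp MvPolynomial.C) r₁ r₂ hred _ z hz c hc d α hr₂ j
      (by rw [hev]; simp)
      (by
        rw [Polynomial.derivative_map, RingHom.comp_apply, Polynomial.eval_map,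
          Polynomial.eval₂_at_apply, hψ, toA0_der, Polynomial.eval_C, map_ne_zero,
          map_ne_zero_iff _ hainj]
        exact gDer_ne F m hm f₀ _)
      (by
        intro k hk
        rw [hev, map_ne_zero, sub_ne_zero]
        intro h
        exact hk (gPart_ne F m hm f₀ _ _ (hainj h)))
    rw [← key, ← hH, hψ, map_ne_zero] at hne
    exact hne

end
end
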